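/- Let G be a finitely generated group with Cayley graph Γ, admitting a minimal, non-elliptic action without inversions on a simplicial tree T, with every edge stabiliser finitely generated, undistorted in G, and satisfying (∂_M E, G) = ∅. Fix subgraphs Γ(𝔢) ⊆ Γ as in the setup. Let γ ⊆ Γ be a Morse geodesic ray. Then: (1) for every edge 𝔢 of T, the intersection γ ∩ Γ(𝔢) is compact; (2) for every halfspace 𝔥, some sub-ray of γ is entirely contained in either Γ(𝔥) or Γ(𝔥*); (3) if a sub-ray of γ is contained in Γ(𝔥), then γ gets arbitrarily far from Γ(𝔥*). -/

import Mathlib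

/-! Everything follows from one fact (`finite_near_subgroup`): if `H` is finitely generated and
undistorted in `G` with empty relative Morse boundary, then a Morse geodesic ray `γ` of `G` visits
any bounded neighbourhood of `H` only finitely often.

Suppose instead that `γ` passes within `R` of points `h₀, h₁, … ∈ H` at times going to infinity.
Word geodesics of `H` from `h₀` to `h_k` are uniform quasi-geodesics of `G` with endpoints near
`γ`, so the Morse property keeps them in a uniform neighbourhood of `γ`
(`MorseSet.inNbhd_of_near`). Balls of `H` being finite, they subconverge to a geodesic ray `β` of
`H` in the same neighbourhood (`exists_limit_ray`). As `β` is a coarse path going to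
infinity along `γ`, it is at finite Hausdorff distance from `γ` (`exists_near_of_coarse_path`),
so `β` is Morse in `G` (`MorseSet.of_near`), and hence in `H` by undistortion
(`MorseSet.comap`). This contradicts the emptiness of the relative Morse boundary.

Since `Γ(𝔢)` is covered by finitely many right translates of `G_𝔢`, (1) is an instance of this
fact. Every edge of `Γ` joining the two sides of `𝔢` lies in `Γ(𝔢)`, so beyond the last visit to
`Γ(𝔢)` the ray stays on one side, which is (2). If `γ` ended up in `Γ(𝔥)` but stayed `R`-close to
`Γ(𝔥*)`, it would eventually stay `R`-close to `Γ(𝔢)`, hence to `G_𝔢`, which proves (3). -/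

open Set Filter Topology
open scoped ENNReal

namespace MorseGoG

/-! ## Metric notions relative to an explicit distance function

Throughout, distances are given by an explicit function `d : X → X → ℝ`, so that the same
notions apply to metric spaces (`d = dist`), to groups with word metrics, and to subgroups
with their own word metrics. -/

variable {X : Type*}

/-- `γ` is a `C`-quasi-geodesic on the parameter set `I ⊆ ℝ` with respect to `d`:
`C ≥ 1` and `|s−t|/C − C ≤ d (γ s) (γ t) ≤ C|s−t| + C` for all `s, t ∈ I`. -/
def IsQG (d : X → X → ℝ) (C : ℝ) (I : Set ℝ) (γ : ℝ → X) : Prop :=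
  1 ≤ C ∧ ∀ s ∈ I, ∀ t ∈ I,
    |s - t| / C - C ≤ d (γ s) (γ t) ∧ d (γ s) (γ t) ≤ C * |s - t| + C

/-- `x` lies in the (closed) `r`-neighbourhood of `A` with respect to `d`. -/
def InNbhd (d : X → X → ℝ) (A : Set X) (r : ℝ) (x : X) : Prop :=
  ∃ a ∈ A, d x a ≤ r

/-- The set `A` (e.g. the image of a quasi-geodesic) is `N`-Morse with respect to `d`:
every `C`-quasi-geodesic segment with endpoints on `A` is contained in the
`N C`-neighbourhood of `A`. -/
def MorseSet (d : X → X → ℝ) (N : ℝ → ℝ) (A : Set X) : Prop :=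
  ∀ C : ℝ, 1 ≤ C → ∀ a b : ℝ, a ≤ b → ∀ α : ℝ → X,
    IsQG d C (Set.Icc a b) α → α a ∈ A → α b ∈ A →
    ∀ t ∈ Set.Icc a b, InNbhd d A (N C) (α t)

/-- `A` is Morse: it is `N`-Morse for some Morse gauge `N`. -/
def IsMorse (d : X → X → ℝ) (A : Set X) : Prop := ∃ N : ℝ → ℝ, MorseSet d N A

/-- A discrete geodesic ray: the sequence of vertices of a geodesic ray in a graph. -/
def IsGeodSeq (d : X → X → ℝ) (γ : ℕ → X) : Prop :=
  ∀ m n : ℕ, d (γ m) (γ n) = |(m : ℝ) - (n : ℝ)|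

/-- A discrete geodesic segment of length `n`. -/
def IsGeodSeg (d : X → X → ℝ) (n : ℕ) (γ : ℕ → X) : Prop :=
  ∀ i ≤ n, ∀ j ≤ n, d (γ i) (γ j) = |(i : ℝ) - (j : ℝ)|

/-- A discrete `C`-quasi-geodesic ray. -/
def IsQGSeq (d : X → X → ℝ) (C : ℝ) (γ : ℕ → X) : Prop :=
  1 ≤ C ∧ ∀ m n : ℕ,
    |(m : ℝ) - n| / C - C ≤ d (γ m) (γ n) ∧ d (γ m) (γ n) ≤ C * |(m : ℝ) - n| + C

/-- Two sets are at finite Hausdorff distance with respect to `d`. -/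
def BddHD (d : X → X → ℝ) (A B : Set X) : Prop :=
  ∃ r : ℝ, (∀ a ∈ A, InNbhd d B r a) ∧ (∀ b ∈ B, InNbhd d A r b)

/-- A discrete edge path with `n` steps: consecutive points are at distance at most `1`
(i.e. equal or joined by an edge, in a graph whose vertex set carries the metric `d`). -/
def IsEdgePath (d : X → X → ℝ) (n : ℕ) (c : ℕ → X) : Prop :=
  ∀ i < n, d (c i) (c (i + 1)) ≤ 1

/-- Combinatorial divergence of a discrete ray `γ` in a graph with vertex distance `d`:
the infimum, over `s ≥ r` and over edge paths joining `γ (s - r)` to `γ (s + r)` and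
avoiding the ball of radius `ε·r` around `γ s`, of the length of the path. -/
noncomputable def gdivergence (d : X → X → ℝ) (γ : ℕ → X) (r : ℕ) (ε : ℝ) : ℝ≥0∞ :=
  ⨅ (s : ℕ) (_ : r ≤ s) (n : ℕ) (c : ℕ → X) (_ : IsEdgePath d n c)
    (_ : c 0 = γ (s - r)) (_ : c n = γ (s + r))
    (_ : ∀ i ≤ n, ε * r < d (c i) (γ s)), (n : ℝ≥0∞)

/-! ## Geodesic metric spaces, geodesic rays, divergence -/

variable {Y : Type*} [MetricSpace Y]

/-- A geodesic metric space: any two points are joined by an isometrically parametrised path. -/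
def IsGeodesicSpace (Y : Type*) [MetricSpace Y] : Prop :=
  ∀ x y : Y, ∃ γ : ℝ → Y, γ 0 = x ∧ γ (dist x y) = y ∧
    ∀ s ∈ Set.Icc 0 (dist x y), ∀ t ∈ Set.Icc 0 (dist x y), dist (γ s) (γ t) = |s - t|

/-- A geodesic ray (defined on `[0,∞)` and extended constantly to negative times). -/
def IsGeodRay (γ : ℝ → Y) : Prop :=
  (∀ s t : ℝ, 0 ≤ s → 0 ≤ t → dist (γ s) (γ t) = |s - t|) ∧ ∀ t : ℝ, γ t = γ (max t 0)

theorem IsGeodRay.lipschitz {γ : ℝ → Y} (h : IsGeodRay γ) : LipschitzWith 1 γ := by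
  apply LipschitzWith.of_dist_le_mul
  intro s t
  rw [h.2 s, h.2 t, h.1 _ _ (le_max_right s 0) (le_max_right t 0)]
  rw [NNReal.coe_one, one_mul, Real.dist_eq]
  exact abs_max_sub_max_le_abs s t 0

/-- Divergence function `δ_γ(r, ε)` of a quasi-geodesic ray `γ` in a metric space:
the infimum of lengths (total variations) of paths connecting `γ (s - r)` to `γ (s + r)`
outside the closed ball `B(γ s, εr)`, over all `s ≥ r`. -/
noncomputable def divergence (γ : ℝ → Y) (r ε : ℝ) : ℝ≥0∞ :=
  ⨅ (s : ℝ) (_ : r ≤ s) (c : ℝ → Y) (_ : ContinuousOn c (Set.Icc 0 1))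
    (_ : c 0 = γ (s - r)) (_ : c 1 = γ (s + r))
    (_ : ∀ t ∈ Set.Icc (0 : ℝ) 1, ε * r < dist (c t) (γ s)),
    eVariationOn c (Set.Icc 0 1)

/-- Quasi-isometric embedding between sets carrying explicit distance functions. -/
def IsQIEmb {Z W : Type*} (dZ : Z → Z → ℝ) (dW : W → W → ℝ) (f : Z → W) : Prop :=
  ∃ C : ℝ, 1 ≤ C ∧ ∀ z z' : Z,
    dZ z z' / C - C ≤ dW (f z) (f z') ∧ dW (f z) (f z') ≤ C * dZ z z' + C

/-! ## The Morse boundary of a proper geodesic metric space -/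

/-- A Morse geodesic ray based at `p` in the metric space `Y`. -/
structure MRay (Y : Type*) [MetricSpace Y] (p : Y) where
  ray : ℝ → Y
  base : ray 0 = p
  geod : IsGeodRay ray
  morse : IsMorse dist (Set.range ray)

/-- Two rays are identified when they are at finite Hausdorff distance. -/
def mrayRel (p : Y) (x y : MRay Y p) : Prop :=
  BddHD dist (Set.range x.ray) (Set.range y.ray)

/-- The Morse boundary of a metric space, as a set: Morse geodesic rays based at `p`,
modulo finite Hausdorff distance. -/
def MorseBoundarySp (Y : Type*) [MetricSpace Y] (p : Y) : Type _ := Quot (mrayRel p)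

/-- The `N`-Morse stratum: `N`-Morse geodesic rays based at `p`. -/
def NRaysSp (Y : Type*) [MetricSpace Y] (p : Y) (N : ℝ → ℝ) : Type _ :=
  {γ : MRay Y p // MorseSet dist N (Set.range γ.ray)}

/-- Each stratum of rays carries the compact-open topology (as a set of continuous maps). -/
noncomputable instance NRaysSp.instTop (p : Y) (N : ℝ → ℝ) : TopologicalSpace (NRaysSp Y p N) :=
  TopologicalSpace.induced
    (fun γ => (⟨γ.1.ray, γ.1.geod.lipschitz.continuous⟩ : C(ℝ, Y))) inferInstance

/-- The Morse boundary carries the direct limit topology over all Morse gauges: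
a set is open iff its intersection with each stratum `∂_M^N Y_p` is open there. -/
noncomputable instance MorseBoundarySp.instTop (p : Y) :
    TopologicalSpace (MorseBoundarySp Y p) :=
  ⨆ N : ℝ → ℝ,
    TopologicalSpace.coinduced (fun γ : NRaysSp Y p N => Quot.mk (mrayRel p) γ.1) inferInstance

/-- The relative Morse boundary `(∂_M Y, f)` of a quasi-isometric embedding `f : Y → X`:
classes of Morse rays of `Y` whose image under `f` is Morse in `X`.  It is a subset of
`∂_M Y` (and carries the subspace topology). -/
def relBoundarySp {Y X : Type*} [MetricSpace Y] [MetricSpace X] (p : Y) (f : Y → X) :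
    Set (MorseBoundarySp Y p) :=
  {ξ | ∃ γ : MRay Y p, Quot.mk (mrayRel p) γ = ξ ∧ IsMorse dist (f '' Set.range γ.ray)}

/-! ## Word metrics and Morse boundaries of finitely generated groups -/

variable {G : Type*} [Group G]

/-- Word length of `g` with respect to the (symmetrised) alphabet `S`. -/
noncomputable def wordLength (S : Set G) (g : G) : ℕ :=
  sInf {n : ℕ | ∃ l : List G, l.length = n ∧ (∀ x ∈ l, x ∈ S ∨ x⁻¹ ∈ S) ∧ l.prod = g}

/-- Word metric on `G` with respect to `S`; this is the distance between vertices in the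
Cayley graph `Cay(G, S)`. -/
noncomputable def wdist (S : Set G) (g h : G) : ℝ := wordLength S (g⁻¹ * h)

/-- A Morse geodesic ray in the Cayley graph of `(G, S)`, based at the identity,
recorded by its sequence of vertices. -/
structure GRay (G : Type*) [Group G] (S : Set G) where
  seq : ℕ → G
  base : seq 0 = 1
  geod : IsGeodSeq (wdist S) seq
  morse : IsMorse (wdist S) (Set.range seq)

/-- Identification of rays at finite Hausdorff distance. -/
def grayRel (S : Set G) (x y : GRay G S) : Prop :=
  BddHD (wdist S) (Set.range x.seq) (Set.range y.seq)

/-- The Morse boundary `∂_M G` of the group `G` with finite generating set `S`. -/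
def MorseBoundary (G : Type*) [Group G] (S : Set G) : Type _ := Quot (grayRel (G := G) S)

/-- The stratum of `N`-Morse rays. -/
def NGRays (G : Type*) [Group G] (S : Set G) (N : ℝ → ℝ) : Type _ :=
  {γ : GRay G S // MorseSet (wdist S) N (Set.range γ.seq)}

/-- The compact-open topology on a stratum: for rays in a graph (vertex sequences) this is
the topology of pointwise convergence of the vertex sequences, `G` being discrete. -/
noncomputable instance NGRays.instTop (S : Set G) (N : ℝ → ℝ) :
    TopologicalSpace (NGRays G S N) :=
  TopologicalSpace.induced (fun γ => γ.1.seq)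
    (@Pi.topologicalSpace ℕ (fun _ => G) (fun _ => ⊥))

/-- The direct limit topology on the Morse boundary of a group. -/
noncomputable instance MorseBoundary.instTop (S : Set G) :
    TopologicalSpace (MorseBoundary G S) :=
  ⨆ N : ℝ → ℝ,
    TopologicalSpace.coinduced (fun γ : NGRays G S N => Quot.mk (grayRel S) γ.1) inferInstance

/-! ## Subgroups: undistortion, relative Morse boundaries -/

/-- `H` is finitely generated and undistorted in `(G, S)`: it has a finite generating set
whose word metric is bi-Lipschitz equivalent (suitably, quasi-isometric) to the metric
induced from `G`. -/
def FGUndistorted (S : Set G) (H : Subgroup G) : Prop :=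
  ∃ T : Finset H, Subgroup.closure (T : Set H) = ⊤ ∧
    ∃ C : ℝ, 1 ≤ C ∧ ∀ h h' : H,
      wdist (T : Set H) h h' ≤ C * wdist S (h : G) (h' : G) + C ∧
      wdist S (h : G) (h' : G) ≤ C * wdist (T : Set H) h h' + C

/-- The relative Morse boundary of `H` in `G` is empty, `(∂_M H, G) = ∅`:
no Morse geodesic ray of `H` (w.r.t. any finite generating set of `H`) remains Morse in `G`. -/
def RelMorseEmpty (S : Set G) (H : Subgroup G) : Prop :=
  ∀ T : Finset H, Subgroup.closure (T : Set H) = ⊤ →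
    ∀ γ : ℕ → H, IsGeodSeq (wdist (T : Set H)) γ →
      IsMorse (wdist (T : Set H)) (Set.range γ) →
      ¬ IsMorse (wdist S) (Set.range fun n => (γ n : G))

/-- The image of the natural injection `(∂_M H, G) ↪ ∂_M G`: those classes in `∂_M G`
having a representative ray staying at bounded distance from `H`. -/
def relBdryImage (S : Set G) (H : Subgroup G) : Set (MorseBoundary G S) :=
  {ξ | ∃ γ : GRay G S, Quot.mk (grayRel S) γ = ξ ∧
        ∃ r : ℝ, ∀ n : ℕ, ∃ h ∈ H, wdist S (γ.seq n) h ≤ r}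

/-- The relative Morse boundary `(∂_M H, G)` as a subset of `∂_M H` (where `∂_M H` is
formed w.r.t. a generating set `T` of `H`): classes of rays that remain Morse in `G`. -/
def relBdryIn (S : Set G) (H : Subgroup G) (T : Set H) : Set (MorseBoundary H T) :=
  {ξ | ∃ γ : GRay H T, Quot.mk (grayRel T) γ = ξ ∧
        IsMorse (wdist S) (Set.range fun n => (γ.seq n : G))}

/-- Specification of the natural map `∂_M H → ∂_M G` (or of its restriction to the relative
boundary): each class is sent to the class of a ray of `G` at finite Hausdorff distance
from the image of (a representative of) the given class. -/
def InclSpec (S : Set G) (H : Subgroup G) (TH : Set H)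
    (F : MorseBoundary H TH → MorseBoundary G S) : Prop :=
  ∀ γ : GRay H TH, ∀ β : GRay G S,
    Quot.mk (grayRel S) β = F (Quot.mk (grayRel TH) γ) →
    BddHD (wdist S) (Set.range fun n => ((γ.seq n : G))) (Set.range β.seq)

/-! ## Asymptotic cones and relatively wide subgroups -/

/-- Admissible sequences for an asymptotic cone: sequences at bounded rescaled distance
from the basepoints `o`. -/
def conePts (ω : Ultrafilter ℕ) (d : X → X → ℝ) (o : ℕ → X) (s : ℕ → ℝ) : Set (ℕ → X) :=
  {x | ∃ B : ℝ, ∀ᶠ n in (ω : Filter ℕ), d (o n) (x n) ≤ B * s n}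

/-- The pseudo-distance of the asymptotic cone: ultralimit of the rescaled distances. -/
noncomputable def coneDist (ω : Ultrafilter ℕ) (d : X → X → ℝ) (s : ℕ → ℝ)
    (x y : ℕ → X) : ℝ :=
  limUnder (ω : Filter ℕ) (fun n => d (x n) (y n) / s n)

/-- The topology of the asymptotic cone, as a topology on representative sequences:
generated by the open balls of the cone pseudo-distance. -/
noncomputable def coneTop (ω : Ultrafilter ℕ) (d : X → X → ℝ) (o : ℕ → X) (s : ℕ → ℝ) :
    TopologicalSpace (ℕ → X) :=
  TopologicalSpace.generateFrom
    {U | ∃ c ∈ conePts ω d o s, ∃ ε : ℝ, 0 < ε ∧ U = {x | coneDist ω d s c x < ε}}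

/-- `z` is a cut point of the asymptotic cone separating the points `x` and `y`:
`x, y` differ from `z` and do not lie in a common connected subset of the complement
of (the point represented by) `z`. -/
def ConeSeparates (ω : Ultrafilter ℕ) (d : X → X → ℝ) (o : ℕ → X) (s : ℕ → ℝ)
    (x y z : ℕ → X) : Prop :=
  coneDist ω d s x z ≠ 0 ∧ coneDist ω d s y z ≠ 0 ∧
  ¬ ∃ A : Set (ℕ → X),
      A ⊆ {w ∈ conePts ω d o s | coneDist ω d s w z ≠ 0} ∧ x ∈ A ∧ y ∈ A ∧
      @IsPreconnected (ℕ → X) (coneTop ω d o s) A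

/-- `H` is relatively wide in `(G, S)`: in every asymptotic cone of `G` (over a
non-principal ultrafilter, arbitrary basepoints and scaling factors tending to infinity),
no two limit points of `H` are separated by a cut point. -/
def RelativelyWide (S : Set G) (H : Subgroup G) : Prop :=
  ∀ ω : Ultrafilter ℕ, (ω : Filter ℕ) ≤ Filter.cofinite →
  ∀ (o : ℕ → G) (s : ℕ → ℝ), (∀ n, 0 < s n) → Tendsto s atTop atTop →
  ∀ x y z : ℕ → G, (∀ n, x n ∈ H) → (∀ n, y n ∈ H) →
    x ∈ conePts ω (wdist S) o s → y ∈ conePts ω (wdist S) o s →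
    z ∈ conePts ω (wdist S) o s →
    ¬ ConeSeparates ω (wdist S) o s x y z

/-- The subgroup `H ≤ V` is relatively wide in `V` (for any, equivalently some, finite
generating set of `V`). -/
def RelWideIn (V H : Subgroup G) : Prop :=
  ∀ SV : Finset V, Subgroup.closure (SV : Set V) = ⊤ →
    RelativelyWide (SV : Set V) (H.subgroupOf V)

/-! ## Actions on simplicial trees -/

variable {VT : Type*}

/-- `G` splits as a graph of groups: it acts on the simplicial tree `T`
(preserving adjacency), minimally, non-elliptically and without inversions. -/
def ActsOnTree (G : Type*) [Group G] {VT : Type*} (T : SimpleGraph VT) [MulAction G VT] :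
    Prop :=
  T.IsTree ∧
  (∀ (g : G) (a b : VT), T.Adj a b → T.Adj (g • a) (g • b)) ∧
  (∀ (g : G) (a b : VT), T.Adj a b → ¬(g • a = b ∧ g • b = a)) ∧
  (¬ ∃ v : VT, ∀ g : G, g • v = v) ∧
  (∀ W : Set VT, W.Nonempty → (∀ (g : G), ∀ v ∈ W, g • v ∈ W) →
    (∀ a ∈ W, ∀ b ∈ W, ∀ c : VT, T.dist a c + T.dist c b = T.dist a b → c ∈ W) →
    W = Set.univ)

/-- The stabiliser of the edge `{a, b}` (pointwise; for actions without inversions this is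
the full edge stabiliser). -/
def edgeStab (G : Type*) [Group G] {VT : Type*} [MulAction G VT] (a b : VT) : Subgroup G :=
  MulAction.stabilizer G a ⊓ MulAction.stabilizer G b

/-- The halfspace determined by the edge `{a, b}` containing `b`: one of the two connected
components of the complement of the open edge. -/
def halfspace {VT : Type*} (T : SimpleGraph VT) (a b : VT) : Set VT :=
  {v | T.dist v b < T.dist v a}

end MorseGoG

namespace MorseGoG

variable {G : Type*} [Group G] {VT : Type*}

/-- A choice of "edge subgraphs" `Γ(𝔢) ⊆ Γ` of the Cayley graph `Γ = Cay(G, S)`, one for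
each (unoriented) edge of the tree `T`, recorded by its vertex set `A a b ⊆ G`,
satisfying the properties of Lemma 3.2 (`AIS lem`).  Here `p` is the fixed base vertex of
`T` and `f_p(g) = g • p` is the orbit map. -/
structure EdgeSubgraphs (G : Type*) [Group G] (S : Set G) {VT : Type*} (T : SimpleGraph VT)
    [MulAction G VT] (p : VT) where
  /-- the vertex set of `Γ(𝔢)` for the edge `𝔢 = {a, b}` -/
  A : VT → VT → Set G
  /-- `Γ(𝔢)` only depends on the unoriented edge -/
  symm : ∀ a b : VT, A a b = A b a
  /-- (1) `Γ(𝔢)` is connected -/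
  conn : ∀ a b : VT, T.Adj a b → ∀ x ∈ A a b, ∀ y ∈ A a b,
    ∃ (n : ℕ) (c : ℕ → G), IsEdgePath (wdist S) n c ∧ c 0 = x ∧ c n = y ∧
      ∀ i ≤ n, c i ∈ A a b
  /-- (1) `Γ(𝔢)` is `G_𝔢`-invariant -/
  inva : ∀ a b : VT, T.Adj a b → ∀ g ∈ edgeStab G a b, ∀ x ∈ A a b, g * x ∈ A a b
  /-- (1) `Γ(𝔢)` is `G_𝔢`-cocompact -/
  cocpt : ∀ a b : VT, T.Adj a b →
    ∃ F : Finset G, ∀ x ∈ A a b, ∃ g ∈ edgeStab G a b, ∃ f ∈ F, x = g * f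
  /-- (2) equivariance: `Γ(g𝔢) = gΓ(𝔢)` -/
  equivariant : ∀ (g : G) (a b : VT), A (g • a) (g • b) = (fun x => g * x) '' A a b
  /-- (3) `Γ(𝔢)` contains every edge of `Γ` with one endpoint in `f_p⁻¹(𝔥)` and the other
  in `f_p⁻¹(𝔥*)` -/
  crossing : ∀ a b : VT, T.Adj a b → ∀ x y : G, wdist S x y = 1 →
    x • p ∈ halfspace T a b → y • p ∈ halfspace T b a → x ∈ A a b ∧ y ∈ A a b
  /-- (4) `N(f_p⁻¹(𝔥), r) ∩ N(f_p⁻¹(𝔥*), r) ⊆ N(Γ(𝔢), r)` -/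
  nbhd : ∀ a b : VT, T.Adj a b → ∀ r : ℝ, 0 ≤ r → ∀ x : G,
    (∃ y : G, y • p ∈ halfspace T a b ∧ wdist S x y ≤ r) →
    (∃ y : G, y • p ∈ halfspace T b a ∧ wdist S x y ≤ r) →
    ∃ z ∈ A a b, wdist S x z ≤ r
  /-- (5) each edge of `Γ` lies in `Γ(𝔢)` for only finitely many edges `𝔢` of `T` -/
  finmany : ∀ x y : G, wdist S x y = 1 →
    {e : VT × VT | T.Adj e.1 e.2 ∧ x ∈ A e.1 e.2 ∧ y ∈ A e.1 e.2}.Finite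

/-- The vertex set of `Γ(𝔥)` for the halfspace `𝔥` of the edge `{a,b}` containing `b`:
`f_p⁻¹(𝔥) ∖ Γ(𝔢)`. -/
def hsVerts (T : SimpleGraph VT) [MulAction G VT] (p : VT)
    (A : VT → VT → Set G) (a b : VT) : Set G :=
  {g : G | g • p ∈ halfspace T a b ∧ g ∉ A a b}

/-- `M(𝔥) ⊆ ∂_M G`: classes of rays eventually contained in `Γ(𝔥)`, for the halfspace `𝔥`
of the edge `{a,b}` containing `b`. -/
def Mset (S : Set G) (T : SimpleGraph VT) [MulAction G VT] (p : VT)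
    (A : VT → VT → Set G) (a b : VT) : Set (MorseBoundary G S) :=
  {ξ | ∃ γ : GRay G S, Quot.mk (grayRel S) γ = ξ ∧
        ∃ n₀ : ℕ, ∀ n ≥ n₀, γ.seq n ∈ hsVerts T p A a b}

end MorseGoG

namespace MorseGoG

/-! ### Quasi-geodesics and Morse sets for explicit distance functions -/

/-- `d` is a pseudo-metric; nonnegativity is a consequence. -/
structure IsPM {X : Type*} (d : X → X → ℝ) : Prop where
  self : ∀ x, d x x = 0
  symm : ∀ x y, d x y = d y x
  tri : ∀ x y z, d x z ≤ d x y + d y z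

theorem IsPM.nonneg {X : Type*} {d : X → X → ℝ} (h : IsPM d) (x y : X) : 0 ≤ d x y := by
  have h1 := h.tri x y x
  rw [h.self, h.symm y x] at h1
  linarith

/-- A quasi-geodesic whose endpoints are only `R`-close to a Morse set still stays close to it:
moving the two endpoints onto the set changes the constant by `2R`. -/
theorem MorseSet.inNbhd_of_near {X : Type*} {d : X → X → ℝ} (hd : IsPM d) {N : ℝ → ℝ} {A : Set X}
    (hA : MorseSet d N A) {C R : ℝ} (hR : 0 ≤ R) {a b : ℝ} (hab : a ≤ b) {α : ℝ → X}
    (hα : IsQG d C (Set.Icc a b) α) (ha : InNbhd d A R (α a)) (hb : InNbhd d A R (α b)) :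
    ∀ t ∈ Set.Icc a b, InNbhd d A (N (C + 2 * R) + R) (α t) := by
  classical
  obtain ⟨x, hx, hxa⟩ := ha
  obtain ⟨y, hy, hyb⟩ := hb
  obtain ⟨hC, hα⟩ := hα
  set α' : ℝ → X := fun t => if t = a then x else if t = b then y else α t with hα'
  have hclose : ∀ t, d (α t) (α' t) ≤ R := by
    intro t
    simp only [hα']
    split_ifs with h1 h2
    · rw [h1]; exact hxa
    · rw [h2]; exact hyb
    · rw [hd.self]; exact hR
  have hqg : IsQG d (C + 2 * R) (Set.Icc a b) α' := by
    refine ⟨by linarith, fun s hs t ht => ?_⟩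
    obtain ⟨h1, h2⟩ := hα s hs t ht
    have hs' := hclose s
    have ht' := hclose t
    have e1 := hd.tri (α s) (α' s) (α t)
    have e2 := hd.tri (α' s) (α' t) (α t)
    have e3 := hd.tri (α' s) (α s) (α' t)
    have e4 := hd.tri (α s) (α t) (α' t)
    rw [hd.symm (α' t) (α t)] at e2
    rw [hd.symm (α' s) (α s)] at e3
    have h3 : |s - t| / (C + 2 * R) ≤ |s - t| / C :=
      div_le_div_of_nonneg_left (abs_nonneg _) (by linarith) (by linarith)
    have h4 : C * |s - t| ≤ (C + 2 * R) * |s - t| :=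
      mul_le_mul_of_nonneg_right (by linarith) (abs_nonneg _)
    constructor <;> linarith
  have hA1 : α' a ∈ A := by simp [hα', hx]
  have hA2 : α' b ∈ A := by
    simp only [hα']
    split_ifs
    · exact hx
    · exact hy
  intro t ht
  obtain ⟨z, hz, hzt⟩ := hA (C + 2 * R) (by linarith) a b hab α' hqg hA1 hA2 t ht
  refine ⟨z, hz, ?_⟩
  have := hd.tri (α t) (α' t) z
  have := hclose t
  linarith

/-- Being Morse is invariant under finite Hausdorff distance. -/
theorem MorseSet.of_near {X : Type*} {d : X → X → ℝ} (hd : IsPM d) {N : ℝ → ℝ} {A B : Set X}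
    (hA : MorseSet d N A) {D D' : ℝ} (hD : 0 ≤ D)
    (hBA : ∀ b ∈ B, InNbhd d A D b) (hAB : ∀ a ∈ A, InNbhd d B D' a) :
    IsMorse d B := by
  refine ⟨fun C => N (C + 2 * D) + D + D', ?_⟩
  intro C _ a b hab α hα ha hb t ht
  obtain ⟨x, hx, hxt⟩ := hA.inNbhd_of_near hd hD hab hα (hBA _ ha) (hBA _ hb) t ht
  obtain ⟨y, hy, hxy⟩ := hAB x hx
  exact ⟨y, hy, by have := hd.tri (α t) x y; linarith⟩

theorem IsQG.comp_qi {X Y : Type*} {dX : X → X → ℝ} {dY : Y → Y → ℝ} {f : X → Y} {C : ℝ}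
    (hC : 1 ≤ C) (h1 : ∀ x y, dX x y ≤ C * dY (f x) (f y) + C)
    (h2 : ∀ x y, dY (f x) (f y) ≤ C * dX x y + C) {K : ℝ} {I : Set ℝ} {α : ℝ → X}
    (hα : IsQG dX K I α) : IsQG dY (C * K + C) I (fun t => f (α t)) := by
  obtain ⟨hK, hα⟩ := hα
  have hCK : K ≤ C * K := by nlinarith
  refine ⟨by linarith, fun s hs t ht => ?_⟩
  obtain ⟨h3, h4⟩ := hα s hs t ht
  have h5 := h1 (α s) (α t)
  have h6 := h2 (α s) (α t)
  have habs := abs_nonneg (s - t)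
  constructor
  · have hC0 : 0 < C := by linarith
    have hK0 : 0 < K := by linarith
    have e1 : |s - t| / (C * K + C) ≤ |s - t| / K / C := by
      rw [div_div]
      exact div_le_div_of_nonneg_left habs (by positivity) (by nlinarith)
    have e2 : |s - t| / K / C ≤ dY (f (α s)) (f (α t)) + 1 + K / C := by
      rw [div_le_iff₀ hC0]
      have : K / C * C = K := by field_simp
      nlinarith
    have e3 : K / C ≤ K := div_le_self hK0.le hC
    linarith
  · nlinarith

/-- If the image of `B` under a quasi-isometric embedding is Morse, then so is `B`. -/
theorem MorseSet.comap {X Y : Type*} {dX : X → X → ℝ} {dY : Y → Y → ℝ} {f : X → Y} {C : ℝ}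
    (hC : 1 ≤ C) (h1 : ∀ x y, dX x y ≤ C * dY (f x) (f y) + C)
    (h2 : ∀ x y, dY (f x) (f y) ≤ C * dX x y + C) {N : ℝ → ℝ} {B : Set X}
    (hB : MorseSet dY N (f '' B)) : IsMorse dX B := by
  refine ⟨fun K => C * N (C * K + C) + C, ?_⟩
  intro K hK a b hab α hα ha hb t ht
  have hq := hα.comp_qi hC h1 h2
  obtain ⟨_, ⟨x, hx, rfl⟩, hxt⟩ := hB _ hq.1 a b hab _ hq ⟨_, ha, rfl⟩ ⟨_, hb, rfl⟩ t ht
  refine ⟨x, hx, (h1 _ _).trans ?_⟩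
  nlinarith

/-- A discrete geodesic segment, made constant on the intervals `[i, i + 1)`, is a
`1`-quasi-geodesic. -/
theorem IsGeodSeg.isQG {X : Type*} {d : X → X → ℝ} {n : ℕ} {c : ℕ → X} (hc : IsGeodSeg d n c) :
    IsQG d 1 (Set.Icc 0 n) (fun t => c ⌊t⌋₊) := by
  refine ⟨le_rfl, fun s hs t ht => ?_⟩
  have hs1 := Nat.floor_le hs.1
  have ht1 := Nat.floor_le ht.1
  have hs2 := Nat.lt_floor_add_one s
  have ht2 := Nat.lt_floor_add_one t
  have hsn : ⌊s⌋₊ ≤ n := Nat.floor_le_of_le hs.2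
  have htn : ⌊t⌋₊ ≤ n := Nat.floor_le_of_le ht.2
  rw [hc _ hsn _ htn]
  constructor
  · rw [div_one, sub_le_iff_le_add]
    rw [abs_le]
    constructor
    · have := neg_abs_le ((⌊s⌋₊ : ℝ) - ⌊t⌋₊); linarith
    · have := le_abs_self ((⌊s⌋₊ : ℝ) - ⌊t⌋₊); linarith
  · rw [one_mul, abs_le]
    constructor
    · have := neg_abs_le (s - t); linarith
    · have := le_abs_self (s - t); linarith

/-- A coarse path `β` near the geodesic ray `γ` which leaves every bounded set passes near every
point of `γ`: its projections to `γ` make bounded jumps and are unbounded. -/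
theorem exists_near_of_coarse_path {X : Type*} {d : X → X → ℝ} (hd : IsPM d) {γ β : ℕ → X}
    (hγ : IsGeodSeq d γ) {D L : ℝ} (hβ : ∀ i, InNbhd d (Set.range γ) D (β i))
    (hL : ∀ i, d (β i) (β (i + 1)) ≤ L) (hunb : ∀ M : ℝ, ∃ i, M < d (β 0) (β i)) :
    ∃ D' : ℝ, ∀ x ∈ Set.range γ, InNbhd d (Set.range β) D' x := by
  classical
  have hβ' : ∀ i, ∃ m, d (β i) (γ m) ≤ D := by
    intro i
    obtain ⟨_, ⟨m, rfl⟩, h⟩ := hβ i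
    exact ⟨m, h⟩
  choose m hm using hβ'
  have hD : 0 ≤ D := (hd.nonneg _ _).trans (hm 0)
  have hL0 : 0 ≤ L := (hd.nonneg _ _).trans (hL 0)
  refine ⟨3 * D + L + m 0, ?_⟩
  rintro _ ⟨k, rfl⟩
  have hex : ∃ i, k ≤ m i := by
    by_contra! hcon
    obtain ⟨i, hi⟩ := hunb (2 * D + m 0 + k)
    have e1 := hd.tri (β 0) (γ (m 0)) (β i)
    have e2 := hd.tri (γ (m 0)) (γ (m i)) (β i)
    rw [hd.symm (γ (m i)), hγ] at e2
    have e3 := hm 0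
    have e4 := hm i
    have e5 : |(m 0 : ℝ) - m i| ≤ m 0 + k := by
      have : (m i : ℝ) ≤ k := by exact_mod_cast (hcon i).le
      have h0 : (0 : ℝ) ≤ m 0 := Nat.cast_nonneg _
      have h1 : (0 : ℝ) ≤ m i := Nat.cast_nonneg _
      rw [abs_le]; constructor <;> linarith
    linarith
  -- the first time the projection of `β` to `γ` has reached `γ k`
  set i := Nat.find hex with hi
  have hki : k ≤ m i := Nat.find_spec hex
  have hdist : |(m i : ℝ) - k| ≤ 2 * D + L + m 0 := by
    have hki' : (k : ℝ) ≤ m i := by exact_mod_cast hki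
    have hm0 : (0 : ℝ) ≤ m 0 := Nat.cast_nonneg _
    rw [abs_of_nonneg (by linarith)]
    rcases Nat.eq_zero_or_pos i with h0 | hpos
    · have : (0 : ℝ) ≤ k := Nat.cast_nonneg _
      rw [h0]; linarith
    · obtain ⟨j, hj⟩ : ∃ j, i = j + 1 := ⟨i - 1, by omega⟩
      have hlt : m j < k := by
        have := Nat.find_min hex (m := j) (by omega)
        omega
      have hlt' : (m j : ℝ) ≤ k := by exact_mod_cast hlt.le
      rw [hj]
      have e1 := hd.tri (γ (m (j + 1))) (β (j + 1)) (γ (m j))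
      have e2 := hd.tri (β (j + 1)) (β j) (γ (m j))
      rw [hγ, hd.symm (γ (m (j + 1)))] at e1
      rw [hd.symm (β (j + 1)) (β j)] at e2
      have e3 := hm j
      have e4 := hm (j + 1)
      have e5 := hL j
      have e6 := le_abs_self ((m (j + 1) : ℝ) - m j)
      linarith
  refine ⟨β i, ⟨i, rfl⟩, ?_⟩
  have e1 := hd.tri (γ k) (γ (m i)) (β i)
  rw [hγ, abs_sub_comm, hd.symm (γ (m i))] at e1
  have e2 := hm i
  linarith

/-! ### Word metrics -/

section Word

variable {G : Type*} [Group G] {S : Set G}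

theorem exists_word (hS : Subgroup.closure S = ⊤) (g : G) :
    ∃ l : List G, l.length = wordLength S g ∧ (∀ x ∈ l, x ∈ S ∨ x⁻¹ ∈ S) ∧ l.prod = g := by
  have hne : {n : ℕ | ∃ l : List G, l.length = n ∧ (∀ x ∈ l, x ∈ S ∨ x⁻¹ ∈ S) ∧
      l.prod = g}.Nonempty := by
    have hg : g ∈ Subgroup.closure S := by rw [hS]; trivial
    rw [← Subgroup.mem_toSubmonoid, Subgroup.closure_toSubmonoid] at hg
    obtain ⟨l, hl, hp⟩ := Submonoid.exists_list_of_mem_closure hg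
    exact ⟨l.length, l, rfl, fun x hx => hl x hx, hp⟩
  exact Nat.sInf_mem hne

theorem wordLength_le {l : List G} (hl : ∀ x ∈ l, x ∈ S ∨ x⁻¹ ∈ S) :
    wordLength S l.prod ≤ l.length :=
  Nat.sInf_le ⟨l, rfl, hl, rfl⟩

theorem wordLength_mul (hS : Subgroup.closure S = ⊤) (g h : G) :
    wordLength S (g * h) ≤ wordLength S g + wordLength S h := by
  obtain ⟨l, hl1, hl2, rfl⟩ := exists_word hS g
  obtain ⟨k, hk1, hk2, rfl⟩ := exists_word hS h
  rw [← hl1, ← hk1, ← List.prod_append, ← List.length_append]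
  refine wordLength_le fun x hx => ?_
  rcases List.mem_append.1 hx with h | h
  · exact hl2 x h
  · exact hk2 x h

theorem wordLength_inv_le (hS : Subgroup.closure S = ⊤) (g : G) :
    wordLength S g⁻¹ ≤ wordLength S g := by
  obtain ⟨l, hl1, hl2, rfl⟩ := exists_word hS g
  rw [← hl1, List.prod_inv_reverse]
  refine (wordLength_le fun x hx => ?_).trans (by simp)
  simp only [List.mem_reverse, List.mem_map] at hx
  obtain ⟨y, hy, rfl⟩ := hx
  rw [inv_inv]
  exact (hl2 y hy).symm

theorem isPM_wdist (hS : Subgroup.closure S = ⊤) : IsPM (wdist S) where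
  self x := by
    have h : wordLength S (1 : G) ≤ 0 := wordLength_le (l := []) (by simp)
    simp only [wdist, inv_mul_cancel]
    exact_mod_cast Nat.le_zero.1 h
  symm := by
    have key : ∀ x y : G, wdist S x y ≤ wdist S y x := by
      intro x y
      have := wordLength_inv_le hS (y⁻¹ * x)
      rw [mul_inv_rev, inv_inv] at this
      simp only [wdist]
      exact_mod_cast this
    exact fun x y => le_antisymm (key x y) (key y x)
  tri x y z := by
    have := wordLength_mul hS (x⁻¹ * y) (y⁻¹ * z)
    rw [show x⁻¹ * y * (y⁻¹ * z) = x⁻¹ * z by group] at this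
    simp only [wdist]
    exact_mod_cast this

theorem finite_words {S' : Set G} (hS : S'.Finite) (n : ℕ) :
    {g : G | ∃ l : List G, l.length = n ∧ (∀ x ∈ l, x ∈ S') ∧ l.prod = g}.Finite := by
  induction n with
  | zero =>
    refine (Set.finite_singleton (1 : G)).subset ?_
    rintro g ⟨l, hl, -, rfl⟩
    simp [List.length_eq_zero_iff.1 hl]
  | succ n ih =>
    refine (hS.image2 (fun a b => a * b) ih).subset ?_
    rintro g ⟨l, hl, hl2, rfl⟩
    cases l with
    | nil => simp at hl
    | cons a l =>
      refine ⟨a, hl2 a (by simp), l.prod, ⟨l, by simpa using hl, fun x hx => hl2 x (by simp [hx]),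
        rfl⟩, by simp⟩

theorem finite_sphere (hfin : S.Finite) (hS : Subgroup.closure S = ⊤) (g : G) (n : ℕ) :
    {h : G | wdist S g h = n}.Finite := by
  have h1 : (S ∪ {x | x⁻¹ ∈ S}).Finite :=
    hfin.union (hfin.preimage (inv_injective.injOn))
  refine ((finite_words h1 n).image (fun x => g * x)).subset ?_
  intro h hh
  have hh' : wordLength S (g⁻¹ * h) = n := by
    have : wdist S g h = n := hh
    simpa [wdist] using this
  obtain ⟨l, hl1, hl2, hl3⟩ := exists_word hS (g⁻¹ * h)
  exact ⟨g⁻¹ * h, ⟨l, hl1.trans hh', hl2, hl3⟩, by simp⟩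

/-- The prefixes of a shortest word spell a geodesic. -/
theorem exists_geodSeg (hS : Subgroup.closure S = ⊤) (g h : G) :
    ∃ (n : ℕ) (c : ℕ → G), wdist S g h = n ∧ IsGeodSeg (wdist S) n c ∧ c 0 = g ∧ c n = h := by
  have hd := isPM_wdist hS
  obtain ⟨l, hl1, hl2, hl3⟩ := exists_word hS (g⁻¹ * h)
  have hlen : wdist S g h = l.length := by rw [hl1]; rfl
  set c : ℕ → G := fun i => g * (l.take i).prod with hc
  have hc0 : c 0 = g := by simp [hc]
  have hcn : c l.length = h := by simp [hc, hl3]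
  have hup : ∀ i j, i ≤ j → wdist S (c i) (c j) ≤ (j : ℝ) - i := by
    intro i j hij
    obtain ⟨k, rfl⟩ := Nat.exists_eq_add_of_le hij
    have h1 : (c i)⁻¹ * c (i + k) = ((l.drop i).take k).prod := by
      simp only [hc, List.take_add, List.prod_append]
      group
    have h2 : wordLength S ((l.drop i).take k).prod ≤ k :=
      (wordLength_le fun x hx =>
        hl2 x (List.mem_of_mem_drop (List.mem_of_mem_take hx))).trans (by simp)
    rw [wdist, h1]
    push_cast
    have : (wordLength S ((l.drop i).take k).prod : ℝ) ≤ k := by exact_mod_cast h2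
    linarith
  have heq : ∀ i j, i ≤ j → j ≤ l.length → wdist S (c i) (c j) = (j : ℝ) - i := by
    intro i j hij hj
    refine le_antisymm (hup i j hij) ?_
    have e1 := hup 0 i (Nat.zero_le _)
    have e2 := hup j l.length hj
    rw [hc0] at e1
    rw [hcn] at e2
    have e3 := hd.tri g (c i) h
    have e4 := hd.tri (c i) (c j) h
    push_cast at e1
    linarith
  refine ⟨l.length, c, hlen, ?_, hc0, hcn⟩
  intro i hi j hj
  rcases le_total i j with hij | hij
  · have : (i : ℝ) ≤ j := by exact_mod_cast hij
    rw [heq i j hij hj, abs_sub_comm, abs_of_nonneg (by linarith)]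
  · have : (j : ℝ) ≤ i := by exact_mod_cast hij
    rw [hd.symm, heq j i hij hi, abs_of_nonneg (by linarith)]

/-- Geodesic segments issuing from `g`, of lengths tending to infinity, converge pointwise, along a
non-principal ultrafilter, to a geodesic ray: at each time they lie in a finite sphere. The
limit ray agrees at each time with some segment that is at least that long. -/
theorem exists_limit_ray (hfin : S.Finite) (hS : Subgroup.closure S = ⊤) {g : G}
    {len : ℕ → ℕ} {c : ℕ → ℕ → G} (hc : ∀ k, IsGeodSeg (wdist S) (len k) (c k))
    (hc0 : ∀ k, c k 0 = g) (hlen : Tendsto len atTop atTop) :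
    ∃ β : ℕ → G, IsGeodSeq (wdist S) β ∧ ∀ i, ∃ k, i ≤ len k ∧ β i = c k i := by
  set U : Ultrafilter ℕ := Filter.hyperfilter ℕ
  have hU : (U : Filter ℕ) ≤ atTop := by
    rw [← Nat.cofinite_eq_atTop]; exact Filter.hyperfilter_le_cofinite
  have hlong : ∀ i, ∀ᶠ k in (U : Filter ℕ), i ≤ len k := fun i =>
    hU (hlen.eventually_ge_atTop i)
  have hex : ∀ i, ∃ v, ∀ᶠ k in (U : Filter ℕ), c k i = v := by
    intro i
    have h1 : ∀ᶠ k in (U : Filter ℕ), ∃ v ∈ {h : G | wdist S g h = i}, c k i = v := by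
      filter_upwards [hlong i] with k hk
      refine ⟨c k i, ?_, rfl⟩
      have := hc k 0 (Nat.zero_le _) i hk
      rw [hc0] at this
      simpa using this
    obtain ⟨v, -, hv⟩ := (Ultrafilter.eventually_exists_mem_iff (finite_sphere hfin hS g i)).1 h1
    exact ⟨v, hv⟩
  choose β hβ using hex
  refine ⟨β, fun i j => ?_, fun i => ?_⟩
  · obtain ⟨k, h1, h2, h3, h4⟩ :=
      ((hβ i).and ((hβ j).and ((hlong i).and (hlong j)))).exists
    rw [← h1, ← h2]
    exact hc k i h3 j h4
  · obtain ⟨k, h1, h2⟩ := ((hβ i).and (hlong i)).exists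
    exact ⟨k, h2, h1.symm⟩

end Word

/-! ### Morse rays and undistorted subgroups -/

/-- A Morse geodesic ray is near a finitely generated undistorted subgroup with empty relative
Morse boundary only for a bounded amount of time. -/
theorem finite_near_subgroup {G : Type*} [Group G] {S : Set G}
    (hS : Subgroup.closure S = ⊤) {H : Subgroup G} (hH : FGUndistorted S H)
    (hrel : RelMorseEmpty S H) {γ : ℕ → G} (hγ : IsGeodSeq (wdist S) γ)
    (hmorse : IsMorse (wdist S) (Set.range γ)) (R : ℝ) :
    {n : ℕ | ∃ h ∈ H, wdist S (γ n) h ≤ R}.Finite := by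
  by_contra hinf
  have hd := isPM_wdist hS
  obtain ⟨T, hT, C, hC, hqi⟩ := hH
  have hdT := isPM_wdist hT
  obtain ⟨N, hN⟩ := hmorse
  have hC0 : 0 < C := by linarith
  have hfar : ∀ k : ℕ, ∃ n, k ≤ n ∧ ∃ h : H, wdist S (γ n) h ≤ R := by
    intro k
    obtain ⟨n, ⟨h, hh, hle⟩, hn⟩ := Set.Infinite.exists_gt hinf k
    exact ⟨n, hn.le, ⟨h, hh⟩, hle⟩
  choose n hn h hh using hfar
  have hR : 0 ≤ R := (hd.nonneg _ _).trans (hh 0)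
  choose len c hlen hc hc0 hcn using fun k => exists_geodSeg hT (h 0) (h k)
  -- `d_T(h₀, h_k) ≥ (d_S(h₀, h_k) - C) / C`, and `d_S(h₀, h_k) ≥ n_k - n_0 - 2R`
  have hlen_tendsto : Tendsto len atTop atTop := by
    rw [tendsto_atTop]
    intro b
    obtain ⟨K, hK⟩ := exists_nat_gt (C * b + C + 2 * R + n 0)
    filter_upwards [eventually_ge_atTop K] with k hk
    have e1 := (hqi (h 0) (h k)).2
    rw [hlen k] at e1
    have e2 := hd.tri (γ (n k)) (h k) (γ (n 0))
    have e3 := hd.tri (h k : G) (h 0) (γ (n 0))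
    rw [hγ] at e2
    rw [hd.symm (h k : G) (h 0), hd.symm (h 0 : G) (γ (n 0))] at e3
    have e4 := hh k
    have e5 := hh 0
    have e6 := le_abs_self ((n k : ℝ) - n 0)
    have e7 : (K : ℝ) ≤ n k := by exact_mod_cast hk.trans (hn k)
    have e8 : C * (b : ℝ) ≤ C * len k := by linarith
    exact_mod_cast le_of_mul_le_mul_left e8 hC0
  obtain ⟨β, hβ, hβc⟩ := exists_limit_ray T.finite_toSet hT hc hc0 hlen_tendsto
  set D : ℝ := N (C * 1 + C + 2 * R) + R with hD
  have hβγ : ∀ i, InNbhd (wdist S) (Set.range γ) D (β i : G) := by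
    intro i
    obtain ⟨k, hik, hik'⟩ := hβc i
    have hq := (hc k).isQG.comp_qi (f := fun x : H => (x : G)) (dY := wdist S) hC
      (fun x y => (hqi x y).1) (fun x y => (hqi x y).2)
    have hnear : ∀ k, InNbhd (wdist S) (Set.range γ) R (h k : G) := fun k =>
      ⟨γ (n k), ⟨_, rfl⟩, by rw [hd.symm]; exact hh k⟩
    have := hN.inNbhd_of_near hd hR (Nat.cast_nonneg (len k)) hq
      (by simpa [hc0] using hnear 0) (by simpa [hcn] using hnear k) i
      ⟨Nat.cast_nonneg i, by exact_mod_cast hik⟩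
    simpa [hik', hD] using this
  have hD0 : 0 ≤ D := by
    obtain ⟨x, -, hx⟩ := hβγ 0
    exact (hd.nonneg _ _).trans hx
  obtain ⟨D', hD'⟩ := exists_near_of_coarse_path hd (β := fun i => (β i : G)) hγ hβγ
    (L := C * 1 + C)
    (by
      intro i
      have := (hqi (β i) (β (i + 1))).2
      rw [hβ] at this
      simpa using this)
    (by
      intro M
      obtain ⟨i, hi⟩ := exists_nat_gt (C * M + C)
      refine ⟨i, ?_⟩
      have := (hqi (β 0) (β i)).1
      rw [hβ] at this
      simp only [CharP.cast_eq_zero, zero_sub, abs_neg, Nat.abs_cast] at this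
      have e : C * M < C * wdist S (β 0 : G) (β i) := by linarith
      exact lt_of_mul_lt_mul_left e hC0.le)
  have hβG : IsMorse (wdist S) (Set.range fun i => (β i : G)) :=
    hN.of_near hd hD0 (by rintro _ ⟨i, rfl⟩; exact hβγ i) hD'
  obtain ⟨N', hN'⟩ := hβG
  have hβH : IsMorse (wdist (T : Set H)) (Set.range β) := by
    refine MorseSet.comap (f := fun x : H => (x : G)) (dY := wdist S) (N := N') hC
      (fun x y => (hqi x y).1) (fun x y => (hqi x y).2) ?_
    rw [← Set.range_comp]
    exact hN'
  exact hrel T hT β hβ hβH ⟨N', hN'⟩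

/-! ### Halfspaces of trees -/

/-- A tree is bipartite, so no vertex is equidistant from the endpoints of an edge. -/
theorem mem_halfspace_or {VT : Type*} {T : SimpleGraph VT} (hT : T.IsTree) {a b : VT}
    (hab : T.Adj a b) (v : VT) : v ∈ halfspace T a b ∨ v ∈ halfspace T b a := by
  have := hT.dist_ne_of_adj v hab
  exact (lt_or_gt_of_ne this).symm

/-- **Corollary 4.4** (Statement 13, `choose a side`).  Under Assumption 4.1, for a Morse
geodesic ray `γ` of `Γ`: (1) `γ ∩ Γ(𝔢)` is compact (finite) for every edge `𝔢`; (2) for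
every halfspace `𝔥`, a sub-ray of `γ` is contained in `Γ(𝔥)` or in `Γ(𝔥*)`; (3) if a
sub-ray of `γ` is contained in `Γ(𝔥)`, then `γ` gets arbitrarily far from `Γ(𝔥*)`. -/
theorem morse_ray_chooses_a_side
    {G VT : Type*} [Group G] [MulAction G VT]
    (S : Finset G) (hSgen : Subgroup.closure (S : Set G) = ⊤)
    (T : SimpleGraph VT) (hact : ActsOnTree G T) (p : VT)
    (hedge : ∀ a b : VT, T.Adj a b →
      FGUndistorted (S : Set G) (edgeStab G a b) ∧
      RelMorseEmpty (S : Set G) (edgeStab G a b))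
    (A : EdgeSubgraphs G (S : Set G) T p)
    (γ : ℕ → G) (hgeod : IsGeodSeq (wdist (S : Set G)) γ)
    (hmorse : IsMorse (wdist (S : Set G)) (Set.range γ)) :
    (∀ a b : VT, T.Adj a b → {n : ℕ | γ n ∈ A.A a b}.Finite) ∧
    (∀ a b : VT, T.Adj a b →
      (∃ n₀ : ℕ, ∀ n ≥ n₀, γ n ∈ hsVerts T p A.A a b) ∨
      (∃ n₀ : ℕ, ∀ n ≥ n₀, γ n ∈ hsVerts T p A.A b a)) ∧
    (∀ a b : VT, T.Adj a b →
      (∃ n₀ : ℕ, ∀ n ≥ n₀, γ n ∈ hsVerts T p A.A a b) →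
      ∀ R : ℝ, ∃ n : ℕ, ∀ y ∈ hsVerts T p A.A b a, R < wdist (S : Set G) (γ n) y) := by
  have hd := isPM_wdist hSgen
  have hnear : ∀ a b : VT, T.Adj a b → ∀ R : ℝ,
      {n : ℕ | ∃ z ∈ A.A a b, wdist (S : Set G) (γ n) z ≤ R}.Finite := by
    intro a b hab R
    obtain ⟨F, hF⟩ := A.cocpt a b hab
    -- every point of `Γ(𝔢)` is within `∑ f ∈ F, |f|` of the edge stabiliser
    refine (finite_near_subgroup hSgen (hedge a b hab).1 (hedge a b hab).2 hgeod hmorse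
      (R + ∑ f ∈ F, wdist (S : Set G) f 1)).subset ?_
    rintro n ⟨z, hz, hzn⟩
    obtain ⟨g, hg, f, hf, rfl⟩ := hF z hz
    refine ⟨g, hg, ?_⟩
    have e1 := hd.tri (γ n) (g * f) g
    have e2 : wdist (S : Set G) (g * f) g = wdist (S : Set G) f 1 := by simp [wdist]
    have e3 : wdist (S : Set G) f 1 ≤ ∑ f ∈ F, wdist (S : Set G) f 1 :=
      Finset.single_le_sum (f := fun f => wdist (S : Set G) f 1)
        (fun i _ => hd.nonneg i 1) hf
    linarith
  have hfin : ∀ a b : VT, T.Adj a b → {n : ℕ | γ n ∈ A.A a b}.Finite := fun a b hab =>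
    (hnear a b hab 0).subset fun n hn => ⟨γ n, hn, (hd.self _).le⟩
  refine ⟨hfin, ?_, ?_⟩
  · intro a b hab
    obtain ⟨M, hM⟩ := (hfin a b hab).bddAbove
    have hout : ∀ n ≥ M + 1, γ n ∉ A.A a b := by
      intro n hn hmem
      have : n ≤ M := hM hmem
      omega
    have hstep : ∀ n, wdist (S : Set G) (γ n) (γ (n + 1)) = 1 := by
      intro n
      rw [hgeod]
      simp
    have hside : ∀ x y : VT, T.Adj x y → A.A x y = A.A a b →
        γ (M + 1) • p ∈ halfspace T x y →
        ∃ n₀ : ℕ, ∀ n ≥ n₀, γ n ∈ hsVerts T p A.A x y := by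
      intro x y hxy hA h0
      refine ⟨M + 1, fun n hn => ⟨?_, by rw [hA]; exact hout n hn⟩⟩
      induction n, hn using Nat.le_induction with
      | base => exact h0
      | succ n hn ih =>
        refine (mem_halfspace_or hact.1 hxy _).resolve_right fun hcross => ?_
        have := (A.crossing x y hxy _ _ (hstep n) ih hcross).1
        rw [hA] at this
        exact hout n hn this
    rcases mem_halfspace_or hact.1 hab (γ (M + 1) • p) with h | h
    · exact Or.inl (hside a b hab rfl h)
    · exact Or.inr (hside b a hab.symm (A.symm b a) h)
  · rintro a b hab ⟨n₀, hn₀⟩ R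
    by_contra! hcon
    refine (Set.infinite_of_not_bddAbove ?_) (hnear a b hab (max R 0))
    rintro ⟨M, hM⟩
    obtain ⟨y, hy, hle⟩ := hcon (n₀ + M + 1)
    obtain ⟨z, hz, hzle⟩ := A.nbhd a b hab (max R 0) (le_max_right _ _) (γ (n₀ + M + 1))
      ⟨_, (hn₀ (n₀ + M + 1) (by omega)).1, by rw [hd.self]; exact le_max_right _ _⟩
      ⟨y, hy.1, hle.trans (le_max_left _ _)⟩
    have : n₀ + M + 1 ≤ M := hM ⟨z, hz, hzle⟩
    omega

end MorseGoG
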